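/- Let σ be a type, A = MvPolynomial σ ℂ, and let {·,·} : A × A → A be a Poisson bracket, i.e. a ℂ-bilinear Lie bracket (alternating, satisfying the Jacobi identity) that is a derivation in each argument: {a, bc} = {a,b}·c + b·{a,c}. Let J = MvPolynomial (σ × ℕ) ℂ, let ∂ be the unique ℂ-linear derivation of J with ∂(X_{(i,n)}) = X_{(i,n+1)}, and let ε : A → J be the ℂ-algebra homomorphism with ε(X_i) = X_{(i,0)}. Then there exists a unique family of ℂ-bilinear products μ_n : J × J → J (n ∈ ℕ) satisfying: (sesquilinearity) μ_n(∂a,b) = −n·μ_{n−1}(a,b) and μ_n(a,∂b) = ∂(μ_n(a,b)) + n·μ_{n−1}(a,b) (μ_{−1} := 0); (antisymmetry) μ_n(a,b) = Σ_{j≥0} (−1)^{n+j+1} (1/j!)·∂^j(μ_{n+j}(b,a)); (right Leibniz) μ_n(a, bc) = μ_n(a,b)·c + b·μ_n(a,c); and (initial values) μ_0(ε(a), ε(b)) = ε({a,b}) and μ_n(ε(a), ε(b)) = 0 for n ≥ 1 and a, b ∈ A. Moreover this family satisfies the finiteness and Jacobi axioms, so that (J, ∂, {μ_n}) is a Lie*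 algebra whose products are derivations of the multiplication — i.e. the jet algebra J∞A canonically becomes a coisson (Poisson vertex) algebra. -/

import Mathlib

/-- The jet algebra `J∞A` of `A = MvPolynomial σ ℂ`, realized as
`MvPolynomial (σ × ℕ) ℂ`. -/
abbrev Jet (σ : Type*) := MvPolynomial (σ × ℕ) ℂ

/-- The canonical derivation `∂` of the jet algebra, `∂(X_{(i,n)}) = X_{(i,n+1)}`. -/
noncomputable def jetD (σ : Type*) : Derivation ℂ (Jet σ) (Jet σ) :=
  MvPolynomial.mkDerivation ℂ fun p : σ × ℕ => MvPolynomial.X (p.1, p.2 + 1)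

/-- The embedding `ε : A → J∞A`, `X_i ↦ X_{(i,0)}`. -/
noncomputable def jetEmb (σ : Type*) : MvPolynomial σ ℂ →ₐ[ℂ] Jet σ :=
  MvPolynomial.rename fun i : σ => (i, 0)

/-- The conditions on the family `{μ_n}` of products on `J∞A`: sesquilinearity
(with `μ_{−1} := 0` encoded by the vanishing coefficient at `n = 0`), antisymmetry,
the right Leibniz rule, and the initial values `μ₀(ε a, ε b) = ε {a,b}`,
`μ_n(ε a, ε b) = 0` for `n ≥ 1`. -/
def JetCond (σ : Type*)
    (P : MvPolynomial σ ℂ →ₗ[ℂ] MvPolynomial σ ℂ →ₗ[ℂ] MvPolynomial σ ℂ)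
    (mu : ℕ → Jet σ →ₗ[ℂ] Jet σ →ₗ[ℂ] Jet σ) : Prop :=
  (∀ (n : ℕ) (a b : Jet σ), mu n (jetD σ a) b = (-(n : ℂ)) • mu (n - 1) a b) ∧
  (∀ (n : ℕ) (a b : Jet σ),
      mu n a (jetD σ b) = jetD σ (mu n a b) + (n : ℂ) • mu (n - 1) a b) ∧
  (∀ (n : ℕ) (a b : Jet σ),
      mu n a b = ∑ᶠ j : ℕ,
        ((-1 : ℂ) ^ (n + j + 1) * ((j.factorial : ℂ))⁻¹) •
          (((jetD σ).toLinearMap ^ j) (mu (n + j) b a))) ∧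
  (∀ (n : ℕ) (a b c : Jet σ), mu n a (b * c) = mu n a b * c + b * mu n a c) ∧
  (∀ a b : MvPolynomial σ ℂ, mu 0 (jetEmb σ a) (jetEmb σ b) = jetEmb σ (P a b)) ∧
  (∀ n : ℕ, 1 ≤ n → ∀ a b : MvPolynomial σ ℂ, mu n (jetEmb σ a) (jetEmb σ b) = 0)


namespace JetAux
open Polynomial

section generic
variable {R : Type*} [CommRing R] [Algebra ℂ R] (d : Derivation ℂ R R)

noncomputable def dP : R[X] →ₗ[ℂ] R[X] :=
  Polynomial.lsum fun k => ((Polynomial.monomial k).restrictScalars ℂ).comp d.toLinearMap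

noncomputable def Lam : R[X] →ₗ[ℂ] R[X] := LinearMap.mulLeft ℂ (X : R[X])

noncomputable def T : R[X] →ₗ[ℂ] R[X] := dP d + Lam

noncomputable def S : R[X] →ₗ[ℂ] R[X] :=
  Polynomial.lsum fun k => -(((-(T d)) ^ k).comp ((Polynomial.monomial 0).restrictScalars ℂ))

theorem poly_ind {Q : R[X] → Prop} (hadd : ∀ p q, Q p → Q q → Q (p + q))
    (hC : ∀ x, Q (C x)) (hX : ∀ p, Q p → Q (Lam p)) (p : R[X]) : Q p := by
  induction p using Polynomial.induction_on' with
  | add p q hp hq => exact hadd p q hp hq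
  | monomial n a =>
    induction n with
    | zero => simpa using hC a
    | succ n ih =>
      have := hX _ ih
      simpa [Lam, Polynomial.X_mul_monomial] using this

theorem dP_mon (k : ℕ) (x : R) : dP d (monomial k x) = monomial k (d x) := by
  simp [dP, Polynomial.lsum_apply, Polynomial.sum_monomial_index]

theorem dP_coeff (p : R[X]) (n : ℕ) : (dP d p).coeff n = d (p.coeff n) := by
  induction p using Polynomial.induction_on' with
  | add p q hp hq => simp [hp, hq]
  | monomial k a =>
    rw [dP_mon, coeff_monomial, coeff_monomial]; split_ifs <;> simp

theorem dP_C (x : R) : dP d (C x) = C (d x) := dP_mon d 0 x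

theorem dP_Lam (p : R[X]) : dP d (Lam p) = Lam (dP d p) := by
  ext n
  cases n <;> simp [Lam, dP_coeff]

theorem dP_smul (b : R) (p : R[X]) : dP d (b • p) = b • dP d p + d b • p := by
  ext n
  simp [dP_coeff, mul_comm]

theorem Lam_smul (b : R) (p : R[X]) : Lam (b • p) = b • Lam p := by
  simp [Lam]

theorem T_apply (p : R[X]) : T d p = dP d p + Lam p := rfl

theorem T_smul (b : R) (p : R[X]) : T d (b • p) = b • T d p + d b • p := by
  simp only [T_apply, dP_smul, Lam_smul, smul_add]; abel

theorem S_mon (k : ℕ) (x : R) : S d (monomial k x) = -(((-(T d)) ^ k) (C x)) := by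
  simp [S, Polynomial.lsum_apply, Polynomial.sum_monomial_index]

theorem S_C (x : R) : S d (C x) = - C x := by
  simpa using S_mon d 0 x

theorem S_Lam (p : R[X]) : S d (Lam p) = - T d (S d p) := by
  induction p using Polynomial.induction_on' with
  | add p q hp hq => simp [hp, hq]; abel
  | monomial k a =>
    have : Lam (monomial k a) = monomial (k+1) a := by simp [Lam, Polynomial.X_mul_monomial]
    rw [this, S_mon, S_mon, pow_succ']
    simp

theorem T_dP (p : R[X]) : T d (dP d p) = dP d (T d p) := by
  simp [T_apply, dP_Lam]

theorem S_dP (p : R[X]) : S d (dP d p) = dP d (S d p) := by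
  induction p using poly_ind with
  | hadd p q hp hq => simp [hp, hq]
  | hC x => simp [dP_C, S_C]
  | hX p hp => rw [dP_Lam, S_Lam, hp, S_Lam, T_dP]; simp

theorem S_T (p : R[X]) : S d (T d p) = - Lam (S d p) := by
  rw [T_apply, map_add, S_dP, S_Lam, T_apply]; abel

theorem S_S (p : R[X]) : S d (S d p) = p := by
  induction p using poly_ind with
  | hadd p q hp hq => simp [hp, hq]
  | hC x => simp [S_C]
  | hX p hp => rw [S_Lam, map_neg, S_T, hp, neg_neg]

theorem K_smul (p : R[X]) : ∀ (a b : R),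
    S d (b • S d (a • p)) = a • S d (b • S d p) := by
  have key : ∀ (b : R) (q : R[X]), S d (b • S d (Lam q)) =
      Lam (S d (b • S d q)) + S d (d b • S d q) := by
    intro b q
    rw [S_Lam, smul_neg, map_neg]
    have : b • T d (S d q) = T d (b • S d q) - d b • S d q := by rw [T_smul]; abel
    rw [this, map_sub, S_T]; abel
  induction p using poly_ind with
  | hadd p q hp hq => intro a b; simp [hp, hq, smul_add]
  | hC x =>
    intro a b
    simp only [smul_C, S_C, smul_neg, map_neg, neg_neg, smul_eq_mul]
    rw [mul_left_comm]
  | hX p hp =>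
    intro a b
    rw [← Lam_smul, key, key, hp, hp, Lam_smul, smul_add]

theorem K_T (b : R) (p : R[X]) : S d (b • S d (T d p)) = T d (S d (b • S d p)) := by
  rw [S_T, smul_neg, ← Lam_smul, map_neg, S_Lam, neg_neg]

noncomputable def K (b : R) : R[X] →ₗ[ℂ] R[X] :=
  S d ∘ₗ LinearMap.mulLeft ℂ (C b) ∘ₗ S d

theorem K_apply (b : R) (p : R[X]) : K d b p = S d (b • S d p) := by
  simp [K, smul_eq_C_mul]

theorem T_coeff (p : R[X]) (n : ℕ) :
    (n.factorial : ℂ) • (T d p).coeff n =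
      d ((n.factorial : ℂ) • p.coeff n) + (n : ℂ) • (((n-1).factorial : ℂ) • p.coeff (n-1)) := by
  cases n with
  | zero => simp [T_apply, dP_coeff, Lam]
  | succ n =>
    simp [T_apply, dP_coeff, Lam, Nat.factorial_succ, smul_smul]

theorem T_pow_coeff (k n : ℕ) (x : R) :
    ((T d ^ k) (C x)).coeff n = (k.choose n : ℂ) • (d.toLinearMap ^ (k - n)) x := by
  induction k generalizing n with
  | zero =>
    cases n <;> simp [coeff_C]
  | succ k ih =>
    rw [pow_succ', Module.End.mul_apply, T_apply, coeff_add, dP_coeff, ih]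
    cases n with
    | zero => simp [Lam, pow_succ']
    | succ n =>
      rw [Lam, LinearMap.mulLeft_apply, coeff_X_mul, ih, Nat.succ_sub_succ, Nat.choose_succ_succ]
      rcases lt_or_ge n k with h | h
      · obtain ⟨m, rfl⟩ := Nat.exists_eq_add_of_lt h
        have e1 : n + m + 1 - n = m + 1 := by omega
        have e2 : n + m + 1 - (n+1) = m := by omega
        rw [e1, e2, pow_succ']
        simp [add_smul]; abel
      · rw [Nat.choose_eq_zero_of_lt (show k < n + 1 by omega)]
        simp

theorem S_coeff (p : R[X]) (n N : ℕ) (hN : p.natDegree < n + N) :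
    (n.factorial : ℂ) • (S d p).coeff n = ∑ j ∈ Finset.range N,
      ((-1 : ℂ) ^ (n + j + 1) * ((j.factorial : ℂ))⁻¹) •
        (d.toLinearMap ^ j) (((n+j).factorial : ℂ) • p.coeff (n+j)) := by
  have h1 : ∀ k x, (S d (monomial k x)).coeff n =
      ((-1 : ℂ)^(k+1) * (k.choose n : ℂ)) • (d.toLinearMap ^ (k-n)) x := by
    intro k x
    rw [S_mon, neg_pow (T d), Module.End.mul_apply]
    have : ∀ y : R[X], ((-1 : R[X] →ₗ[ℂ] R[X])^k) y = ((-1:ℂ)^k) • y := by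
      intro y
      induction k with
      | zero => simp
      | succ k ih => rw [pow_succ', Module.End.mul_apply, ih]; simp [pow_succ]
    rw [this, coeff_neg, coeff_smul, T_pow_coeff, smul_smul, pow_succ]
    simp
  conv_lhs => rw [p.as_sum_range' (n+N) hN]
  rw [map_sum, finsetSum_coeff, Finset.smul_sum, Finset.sum_range_add]
  rw [Finset.sum_eq_zero, zero_add]
  · apply Finset.sum_congr rfl
    intro j _
    rw [h1, map_smul, smul_smul, smul_smul]
    congr 1
    · have h := Nat.add_choose_mul_factorial_mul_factorial n j
      rw [← Nat.choose_symm_add] at h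
      have h' : ((n+j).choose n : ℂ) * n.factorial * j.factorial = (n+j).factorial := by
        exact_mod_cast h
      have hj : (j.factorial : ℂ) ≠ 0 := by exact_mod_cast j.factorial_ne_zero
      rw [← h']; field_simp
    · simp
  · intro k hk
    rw [h1, Nat.choose_eq_zero_of_lt (by simpa using hk)]; simp

end generic

section jet
variable {σ : Type*}

theorem jetD_X (l : σ) (k : ℕ) :
    jetD σ (MvPolynomial.X (l, k)) = MvPolynomial.X (l, k+1) := by
  simp [jetD, MvPolynomial.mkDerivation_X]

theorem der_ext {M : Type*} [AddCommGroup M] [Module ℂ M] [Module (Jet σ) M]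
    (t : M → M) (F G : Derivation ℂ (Jet σ) M)
    (hF : ∀ b, F (jetD σ b) = t (F b)) (hG : ∀ b, G (jetD σ b) = t (G b))
    (h : ∀ l, F (MvPolynomial.X (l, 0)) = G (MvPolynomial.X (l, 0))) : F = G := by
  apply MvPolynomial.derivation_ext
  rintro ⟨l, k⟩
  induction k with
  | zero => exact h l
  | succ k ih => rw [← jetD_X, hF, hG, ih]

noncomputable def Der (q : σ → (Jet σ)[X]) : Derivation ℂ (Jet σ) (Jet σ)[X] :=
  MvPolynomial.mkDerivation ℂ fun p : σ × ℕ => ((T (jetD σ)) ^ p.2) (q p.1)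

theorem Der_X (q : σ → (Jet σ)[X]) (l : σ) (k : ℕ) :
    Der q (MvPolynomial.X (l, k)) = ((T (jetD σ)) ^ k) (q l) := by
  simp [Der, MvPolynomial.mkDerivation_X]

theorem Der_X0 (q : σ → (Jet σ)[X]) (l : σ) :
    Der q (MvPolynomial.X (l, 0)) = q l := by
  simp [Der_X]

theorem Der_d (q : σ → (Jet σ)[X]) (b : Jet σ) :
    Der q (jetD σ b) = T (jetD σ) (Der q b) := by
  induction b using MvPolynomial.induction_on with
  | C c =>
    rw [← MvPolynomial.algebraMap_eq]; simp
  | add p r hp hr => simp [hp, hr]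
  | mul_X p i hp =>
    obtain ⟨l, k⟩ := i
    have hx : Der q (jetD σ (MvPolynomial.X (l, k))) =
        T (jetD σ) (Der q (MvPolynomial.X (l, k))) := by
      rw [jetD_X, Der_X, Der_X, pow_succ', Module.End.mul_apply]
    simp only [Derivation.leibniz, map_add, smul_eq_mul, T_smul, hp, hx]
    abel

variable (P : MvPolynomial σ ℂ →ₗ[ℂ] MvPolynomial σ ℂ →ₗ[ℂ] MvPolynomial σ ℂ)

noncomputable def DD (l : σ) : Derivation ℂ (Jet σ) (Jet σ)[X] :=
  Der fun i => C (jetEmb σ (P (MvPolynomial.X l) (MvPolynomial.X i)))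

noncomputable def Br (a : Jet σ) : Derivation ℂ (Jet σ) (Jet σ)[X] :=
  Der fun l => S (jetD σ) (DD P l a)

theorem Br_X0 (a : Jet σ) (l : σ) :
    Br P a (MvPolynomial.X (l, 0)) = S (jetD σ) (DD P l a) := Der_X0 _ _

theorem Br_d (a b : Jet σ) : Br P a (jetD σ b) = T (jetD σ) (Br P a b) := Der_d _ _

theorem Br_add (a a' : Jet σ) : Br P (a + a') = Br P a + Br P a' := by
  apply der_ext (T (jetD σ))
  · exact Br_d P _
  · intro b; simp [Br_d]
  · intro l; simp [Br_X0]

theorem Br_smul (c : ℂ) (a : Jet σ) : Br P (c • a) = c • Br P a := by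
  apply der_ext (T (jetD σ))
  · exact Br_d P _
  · intro b; simp [Br_d]
  · intro l; simp [Br_X0]

/-- compose a derivation with a `J`-linear map -/
theorem Br_dl (a b : Jet σ) : Br P (jetD σ a) b = - Lam (Br P a b) := by
  let F : Derivation ℂ (Jet σ) (Jet σ)[X] := Derivation.mk' (-(Lam ∘ₗ (Br P a).toLinearMap))
    (by intro x y; simp [Lam_smul]; abel)
  have : Br P (jetD σ a) = F := by
    apply der_ext (T (jetD σ))
    · exact Br_d P _
    · intro b
      simp [F, Br_d, T_apply, dP_Lam]
      abel
    · intro l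
      have hF : ∀ x, F x = - Lam (Br P a x) := fun _ => rfl
      rw [Br_X0, hF, Br_X0, DD, Der_d, S_T]
  rw [this]; rfl

theorem Br_mul (b c a : Jet σ) : Br P (b * c) a =
    S (jetD σ) (b • S (jetD σ) (Br P c a)) + S (jetD σ) (c • S (jetD σ) (Br P b a)) := by
  let F : Derivation ℂ (Jet σ) (Jet σ)[X] := Derivation.mk'
    (K (jetD σ) b ∘ₗ (Br P c).toLinearMap + K (jetD σ) c ∘ₗ (Br P b).toLinearMap)
    (by
      intro x y
      simp only [LinearMap.add_apply, LinearMap.comp_apply,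
        Derivation.coeFn_coe, Derivation.leibniz, map_add, K_apply, K_smul, smul_add]
      abel)
  have hF : ∀ a, F a = S (jetD σ) (b • S (jetD σ) (Br P c a)) +
      S (jetD σ) (c • S (jetD σ) (Br P b a)) := by
    intro a; rw [← K_apply, ← K_apply]; rfl
  have : Br P (b * c) = F := by
    apply der_ext (T (jetD σ))
    · exact Br_d P _
    · intro b
      simp only [hF, Br_d, K_T, map_add]
    · intro l
      simp only [hF, Br_X0, S_S, Derivation.leibniz, map_add]
  rw [this, hF]

variable {P} (halt : ∀ a : MvPolynomial σ ℂ, P a a = 0)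
    (hleib : ∀ a b c : MvPolynomial σ ℂ, P a (b * c) = P a b * c + b * P a c)

include halt in
theorem P_skew (a b : MvPolynomial σ ℂ) : P a b = - P b a := by
  have := halt (a + b)
  simp [halt] at this
  exact eq_neg_of_add_eq_zero_left this

theorem jetEmb_X (i : σ) : jetEmb σ (MvPolynomial.X i) = MvPolynomial.X (i, 0) := by
  simp [jetEmb]

include hleib in
theorem emb_ext (F : Derivation ℂ (Jet σ) (Jet σ)[X]) (a : MvPolynomial σ ℂ)
    (h : ∀ i, F (MvPolynomial.X (i, 0)) = C (jetEmb σ (P a (MvPolynomial.X i))))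
    (f : MvPolynomial σ ℂ) : F (jetEmb σ f) = C (jetEmb σ (P a f)) := by
  have h1 : P a 1 = 0 := by
    have := hleib a 1 1
    simpa using this
  induction f using MvPolynomial.induction_on with
  | C c =>
    have : (MvPolynomial.C c : MvPolynomial σ ℂ) = c • 1 := by
      rw [MvPolynomial.smul_eq_C_mul, mul_one]
    rw [this]; simp [h1]
  | add p q hp hq => simp [hp, hq]
  | mul_X p i hp =>
    rw [map_mul, Derivation.leibniz, jetEmb_X, h, hp, hleib]
    simp only [smul_C, smul_eq_mul, map_add, map_mul, jetEmb_X]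
    ring

include hleib in
theorem DD_emb (i : σ) (f : MvPolynomial σ ℂ) :
    DD P i (jetEmb σ f) = C (jetEmb σ (P (MvPolynomial.X i) f)) :=
  emb_ext hleib _ _ (fun _ => Der_X0 _ _) f

include halt hleib in
theorem Br_emb (a b : MvPolynomial σ ℂ) :
    Br P (jetEmb σ a) (jetEmb σ b) = C (jetEmb σ (P a b)) := by
  apply emb_ext hleib
  intro i
  rw [Br_X0, DD_emb hleib, S_C, P_skew halt a]
  simp

include halt hleib in
theorem Br_gen (i : σ) : Br P (MvPolynomial.X (i, 0)) = DD P i := by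
  apply der_ext (T (jetD σ))
  · exact Br_d P _
  · exact Der_d _
  · intro l
    rw [← jetEmb_X, ← jetEmb_X, Br_emb halt hleib, DD_emb hleib]

include halt hleib in
theorem Br_skew (a b : Jet σ) : Br P a b = S (jetD σ) (Br P b a) := by
  induction b using MvPolynomial.induction_on with
  | C c =>
    have : (MvPolynomial.C c : Jet σ) = c • (1 * 1) := by
      rw [MvPolynomial.smul_eq_C_mul, mul_one, mul_one]
    have h1 := Br_mul P 1 1 a
    simp only [one_smul, S_S, mul_one] at h1
    have h2 : Br P 1 a = 0 := by simpa using h1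
    rw [this, Br_smul]; simp [h2]
  | add p q hp hq => simp [Br_add, hp, hq]
  | mul_X p i hp =>
    have hx : Br P a (MvPolynomial.X i) = S (jetD σ) (Br P (MvPolynomial.X i) a) := by
      obtain ⟨l, k⟩ := i
      induction k with
      | zero => rw [Br_X0, Br_gen halt hleib]
      | succ k ih => rw [← jetD_X, Br_d, Br_dl, ih, map_neg, S_Lam, neg_neg]
    rw [Br_mul, map_add, S_S, S_S, Derivation.leibniz, hp, hx]

variable (P) in
noncomputable def MU (n : ℕ) : Jet σ →ₗ[ℂ] Jet σ →ₗ[ℂ] Jet σ :=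
  LinearMap.mk₂ ℂ (fun a b => (n.factorial : ℂ) • (Br P a b).coeff n)
    (by intro a a' b; simp [Br_add])
    (by intro c a b; simp [Br_smul, smul_smul, mul_comm])
    (by intro a b b'; simp)
    (by intro c a b; simp [smul_smul, mul_comm])

theorem MU_apply (n : ℕ) (a b : Jet σ) :
    MU P n a b = (n.factorial : ℂ) • (Br P a b).coeff n := rfl

theorem MU_zero (a b : Jet σ) : ∃ N : ℕ, ∀ n ≥ N, MU P n a b = 0 := by
  refine ⟨(Br P a b).natDegree + 1, fun n hn => ?_⟩
  rw [MU_apply, coeff_eq_zero_of_natDegree_lt (by omega), smul_zero]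

include halt hleib in
theorem MU_cond : JetCond σ P (MU P) := by
  refine ⟨?_, ?_, ?_, ?_, ?_, ?_⟩
  · intro n a b
    simp only [MU_apply, Br_dl]
    cases n with
    | zero => simp [Lam]
    | succ n =>
      simp only [Lam, LinearMap.mulLeft_apply, coeff_neg, coeff_X_mul, smul_neg, neg_smul,
        Nat.factorial_succ, mul_smul, Nat.add_sub_cancel, Nat.cast_mul]
  · intro n a b
    simp only [MU_apply, Br_d, T_coeff]
  · intro n a b
    obtain ⟨N, hN⟩ := MU_zero (P := P) b a
    have hN' : (Br P b a).natDegree < n + (N + (Br P b a).natDegree + 1) := by omega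
    rw [MU_apply, Br_skew halt hleib, S_coeff _ _ _ _ hN', finsum_eq_sum_of_support_subset]
    · rfl
    · intro j hj
      by_contra h
      apply hj
      simp only [Finset.coe_range, Set.mem_Iio, not_lt] at h
      have := hN (n + j) (by omega)
      simp [this]
  · intro n a b c
    simp only [MU_apply, Derivation.leibniz, coeff_add, coeff_smul, smul_eq_mul, smul_add,
      mul_smul_comm]
    rw [mul_comm c, smul_mul_assoc, add_comm]
  · intro a b
    simp [MU_apply, Br_emb halt hleib]
  · intro n hn a b
    rw [MU_apply, Br_emb halt hleib, coeff_C, if_neg (by omega), smul_zero]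

noncomputable def muDer {mu : ℕ → Jet σ →ₗ[ℂ] Jet σ →ₗ[ℂ] Jet σ} (h : JetCond σ P mu) (a : Jet σ) :
    Derivation ℂ (Jet σ) (ℕ → Jet σ) :=
  Derivation.mk' (LinearMap.pi fun n => mu n a) (by
    intro b c; ext1 n
    simp only [LinearMap.pi_apply, Pi.add_apply, Pi.smul_apply, smul_eq_mul, h.2.2.2.1]
    ring)

theorem mu_unique {mu nu : ℕ → Jet σ →ₗ[ℂ] Jet σ →ₗ[ℂ] Jet σ} (h : JetCond σ P mu)
    (h' : JetCond σ P nu) : mu = nu := by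
  have hext : ∀ a, (∀ n l, mu n a (MvPolynomial.X (l, 0)) = nu n a (MvPolynomial.X (l, 0))) →
      ∀ n b, mu n a b = nu n a b := by
    intro a ha n b
    have : muDer h a = muDer h' a := by
      apply der_ext (fun (p : ℕ → Jet σ) (n : ℕ) => jetD σ (p n) + (n : ℂ) • p (n - 1))
      · intro b; ext1 n; exact h.2.1 n a b
      · intro b; ext1 n; exact h'.2.1 n a b
      · intro l; ext1 n; exact ha n l
    exact congrFun (DFunLike.congr_fun this b) n
  have gen : ∀ i n b, mu n (MvPolynomial.X (i, 0)) b = nu n (MvPolynomial.X (i, 0)) b := by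
    intro i
    apply hext
    intro n l
    rw [← jetEmb_X, ← jetEmb_X]
    rcases Nat.eq_zero_or_pos n with rfl | hn
    · rw [h.2.2.2.2.1, h'.2.2.2.2.1]
    · rw [h.2.2.2.2.2 n hn, h'.2.2.2.2.2 n hn]
  funext n; refine LinearMap.ext fun a => LinearMap.ext fun b => ?_
  apply hext
  intro n l
  rw [h.2.2.1, h'.2.2.1]
  simp only [gen]

end jet

section comb

theorem comb1 (n l : ℕ) (hl : l ≤ n) :
    ∑ i ∈ Finset.range (n + 1), (n.choose i : ℂ) * ((n - i).choose l : ℂ) * (-1) ^ (n - i - l)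
      = if l = n then 1 else 0 := by
  have h : ∀ i ∈ Finset.range (n+1), (n.choose i : ℂ) * ((n - i).choose l : ℂ) * (-1) ^ (n - i - l)
      = (n.choose l : ℂ) * (-1) ^ (n - l) * ((-1) ^ i * ((n - l).choose i : ℂ)) := by
    intro i hi
    rw [Finset.mem_range] at hi
    rcases le_or_gt i (n - l) with h | h
    · have h1 : n.choose i * (n - i).choose l = n.choose l * (n - l).choose i := by
        have e1 := Nat.choose_mul (n := n) (k := i + l) (s := i) (by omega)
        have e2 := Nat.choose_mul (n := n) (k := i + l) (s := l) (by omega)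
        rw [Nat.add_sub_cancel_left] at e1
        rw [Nat.add_sub_cancel] at e2
        rw [← e1, ← e2, Nat.choose_symm_add]
      have h2 : ((n.choose i : ℂ)) * ((n - i).choose l : ℂ) =
          (n.choose l : ℂ) * ((n - l).choose i : ℂ) := by exact_mod_cast h1
      have h3 : (-1 : ℂ) ^ (n - l) * (-1) ^ i = (-1) ^ (n - i - l) := by
        have : n - l = (n - i - l) + i := by omega
        rw [this, pow_add, mul_assoc, ← mul_pow]; simp
      rw [h2, ← h3]; ring
    · rw [Nat.choose_eq_zero_of_lt h, Nat.choose_eq_zero_of_lt (show n - i < l by omega)]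
      simp
  rw [Finset.sum_congr rfl h, ← Finset.mul_sum]
  have h4 : ∑ i ∈ Finset.range (n+1), ((-1 : ℂ) ^ i * ((n - l).choose i : ℂ)) =
      ∑ i ∈ Finset.range (n - l +1), ((-1 : ℂ) ^ i * ((n - l).choose i : ℂ)) := by
    symm
    apply Finset.sum_subset
    · intro i; simp only [Finset.mem_range]; omega
    · intro i _ hi
      simp only [Finset.mem_range, not_lt] at hi
      rw [Nat.choose_eq_zero_of_lt (by omega)]; simp
  have h5 : ∑ i ∈ Finset.range (n - l +1), ((-1 : ℂ) ^ i * ((n - l).choose i : ℂ)) =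
      if n - l = 0 then 1 else 0 := by
    exact_mod_cast congrArg (Int.cast : ℤ → ℂ) (Int.alternating_sum_range_choose (n := n - l))
  rw [h4, h5]
  rcases eq_or_lt_of_le hl with rfl | h
  · simp
  · rw [if_neg (by omega), if_neg (by omega), mul_zero]

theorem comb2 (n : ℕ) : ∀ (M k : ℕ), n ≤ M →
    ∑ p ∈ Finset.HasAntidiagonal.antidiagonal k, (-1 : ℂ) ^ p.1 * (n.choose p.1 : ℂ) * ((M - p.1).choose p.2 : ℂ)
      = ((M - n).choose k : ℂ) := by
  induction n with
  | zero =>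
    intro M k _
    cases k with
    | zero => simp
    | succ k => rw [Finset.Nat.sum_antidiagonal_succ]; simp
  | succ n ih =>
    intro M k hM
    obtain ⟨M, rfl⟩ : ∃ M', M = M' + 1 := ⟨M - 1, by omega⟩
    cases k with
    | zero => simp
    | succ k =>
      have e1 := ih (M+1) (k+1) (by omega)
      have e2 := ih M k (by omega)
      rw [Finset.Nat.sum_antidiagonal_succ] at e1 ⊢
      simp only [pow_zero, Nat.choose_zero_right, Nat.cast_one, mul_one, Nat.sub_zero,
        Nat.add_sub_add_right, one_mul] at e1 ⊢
      have e3 : ((M + 1 - n).choose (k+1) : ℂ) = ((M - n).choose k : ℂ) + ((M-n).choose (k+1) : ℂ) := by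
        rw [show M + 1 - n = (M - n) + 1 by omega, Nat.choose_succ_succ]; push_cast; rfl
      rw [eq_sub_of_add_eq' e3.symm, ← e1, ← e2, add_sub_assoc, ← Finset.sum_sub_distrib]
      congr 1
      apply Finset.sum_congr rfl
      intro p _
      rw [Nat.choose_succ_succ]; push_cast; ring

theorem sum_diag {V : Type*} [AddCommMonoid V] (N : ℕ) (g : ℕ → ℕ → V)
    (hg : ∀ i r, N ≤ i + r → g i r = 0) :
    ∑ j ∈ Finset.range N, ∑ p ∈ Finset.HasAntidiagonal.antidiagonal j, g p.1 p.2 =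
      ∑ i ∈ Finset.range N, ∑ r ∈ Finset.range N, g i r := by
  simp only [Finset.Nat.sum_antidiagonal_eq_sum_range_succ g]
  rw [Finset.sum_range_diag_flip]
  apply Finset.sum_congr rfl
  intro i hi
  apply Finset.sum_subset
  · intro r; simp only [Finset.mem_range]; omega
  · intro r _ hr
    simp only [Finset.mem_range, not_lt] at hr
    exact hg _ _ (by omega)

theorem sum_ext_range {V : Type*} [AddCommMonoid V] {n N : ℕ} (h : n ≤ N) (f : ℕ → V)
    (hf : ∀ i, n ≤ i → f i = 0) :
    ∑ i ∈ Finset.range n, f i = ∑ i ∈ Finset.range N, f i := by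
  apply Finset.sum_subset
  · intro r; simp only [Finset.mem_range]; omega
  · intro r _ hr
    simp only [Finset.mem_range, not_lt] at hr
    exact hf _ hr

end comb

section jac
variable {σ : Type*}

/-- divided powers of the derivation -/
noncomputable def dd (j : ℕ) : Jet σ →ₗ[ℂ] Jet σ :=
  ((j.factorial : ℂ))⁻¹ • (jetD σ).toLinearMap ^ j

theorem dd_zero (x : Jet σ) : dd 0 x = x := by simp [dd]

theorem dd_succ (j : ℕ) (x : Jet σ) :
    jetD σ (dd j x) = ((j : ℂ) + 1) • dd (j + 1) x := by
  have : ((j : ℂ) + 1) ≠ 0 := by exact_mod_cast j.succ_ne_zero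
  have e : (jetD σ) (((jetD σ).toLinearMap ^ j) x) = ((jetD σ).toLinearMap ^ (j+1)) x := by
    rw [pow_succ']; rfl
  simp only [dd, LinearMap.smul_apply, Derivation.map_smul, e, smul_smul, Nat.factorial_succ]
  congr 1
  push_cast
  field_simp

theorem eq_of_smul {c : ℂ} (hc : c ≠ 0) {x y : Jet σ} (h : c • x = c • y) : x = y := by
  have := congrArg (fun z => c⁻¹ • z) h
  simpa [smul_smul, hc] using this

noncomputable def SN (N : ℕ) (p : ℕ → Jet σ) (m : ℕ) : Jet σ :=
  ∑ j ∈ Finset.range N, ((-1 : ℂ) ^ (m + j + 1)) • dd j (p (m + j))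

theorem SN_shift (N : ℕ) (p : ℕ → Jet σ) (m s : ℕ) :
    SN N (fun k => p (k + s)) m = ((-1 : ℂ) ^ s) • SN N p (m + s) := by
  simp only [SN, Finset.smul_sum, smul_smul]
  apply Finset.sum_congr rfl
  intro j _
  rw [show m + s + j = m + j + s by omega, show m + j + s + 1 = (m + j + 1) + s by omega,
    pow_add _ (m+j+1), mul_left_comm, ← mul_pow]
  simp

theorem SN_add (N : ℕ) (p q : ℕ → Jet σ) (m : ℕ) :
    SN N (fun k => p k + q k) m = SN N p m + SN N q m := by
  simp [SN, Finset.sum_add_distrib]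

theorem SN_sum (N : ℕ) (s : Finset ℕ) (c : ℕ → ℂ) (p : ℕ → ℕ → Jet σ) (m : ℕ) :
    SN N (fun k => ∑ l ∈ s, c l • p l k) m = ∑ l ∈ s, c l • SN N (p l) m := by
  simp only [SN, map_sum, map_smul, Finset.smul_sum]
  rw [Finset.sum_comm]
  refine Finset.sum_congr rfl fun l _ => Finset.sum_congr rfl fun j _ => ?_
  rw [smul_comm]

variable {P : MvPolynomial σ ℂ →ₗ[ℂ] MvPolynomial σ ℂ →ₗ[ℂ] MvPolynomial σ ℂ}
  {mu : ℕ → Jet σ →ₗ[ℂ] Jet σ →ₗ[ℂ] Jet σ} (h : JetCond σ P mu)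
  (hfin : ∀ a b : Jet σ, ∃ N : ℕ, ∀ n ≥ N, mu n a b = 0)

include hfin in
theorem hfin_many (f g : ℕ → Jet σ) (n : ℕ) :
    ∃ N : ℕ, ∀ i ≤ n, ∀ k ≥ N, mu k (f i) (g i) = 0 := by
  choose N hN using fun i => hfin (f i) (g i)
  refine ⟨(Finset.range (n+1)).sup N, fun i hi k hk => hN i k (le_trans ?_ hk)⟩
  exact Finset.le_sup (f := N) (by simpa using Nat.lt_succ_of_le hi)

include h in
theorem mu_skew (a b : Jet σ) (n N : ℕ) (hN : ∀ k ≥ N, mu k b a = 0) :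
    mu n a b = SN N (fun k => mu k b a) n := by
  rw [h.2.2.1, finsum_eq_sum_of_support_subset (s := Finset.range N)]
  · apply Finset.sum_congr rfl
    intro j _
    simp [dd, smul_smul]
  · intro j hj
    by_contra hc
    apply hj
    simp only [Finset.coe_range, Set.mem_Iio, not_lt] at hc
    have := hN (n + j) (by omega)
    simp [this]

include h in
theorem mu_dd_left (j : ℕ) : ∀ (n : ℕ) (x c : Jet σ),
    mu n (dd j x) c = ((-1 : ℂ) ^ j * (n.choose j : ℂ)) • mu (n - j) x c := by
  induction j with
  | zero => intro n x c; simp [dd_zero]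
  | succ j ih =>
    intro n x c
    have hj : ((j : ℂ) + 1) ≠ 0 := by exact_mod_cast j.succ_ne_zero
    apply eq_of_smul hj
    rw [← LinearMap.smul_apply, ← map_smul, ← dd_succ, h.1, ih, smul_smul, smul_smul]
    cases n with
    | zero => simp
    | succ n =>
      have e : ((n : ℂ) + 1) * (n.choose j : ℂ) = ((n+1).choose (j+1) : ℂ) * ((j : ℂ) + 1) := by
        exact_mod_cast Nat.add_one_mul_choose_eq n j
      simp only [Nat.add_sub_cancel, Nat.add_sub_add_right]
      congr 1
      rw [pow_succ]; push_cast
      linear_combination (-(-1 : ℂ)^j) * e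

include h in
theorem mu_dd_right (j : ℕ) : ∀ (n : ℕ) (a x : Jet σ),
    mu n a (dd j x) =
      ∑ p ∈ Finset.HasAntidiagonal.antidiagonal j, (n.choose p.1 : ℂ) • dd p.2 (mu (n - p.1) a x) := by
  induction j with
  | zero => intro n x c; simp [dd_zero]
  | succ j ih =>
    intro n a x
    have hj : ((j : ℂ) + 1) ≠ 0 := by exact_mod_cast j.succ_ne_zero
    apply eq_of_smul hj
    rw [← map_smul, ← dd_succ, h.2.1, ih, ih, map_sum, Finset.smul_sum, Finset.smul_sum]
    have e1 : ∀ p ∈ Finset.HasAntidiagonal.antidiagonal (j+1),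
        ((j : ℂ) + 1) • (n.choose p.1 : ℂ) • dd p.2 (mu (n - p.1) a x) =
        (p.2 : ℂ) • (n.choose p.1 : ℂ) • dd p.2 (mu (n - p.1) a x) +
        (p.1 : ℂ) • (n.choose p.1 : ℂ) • dd p.2 (mu (n - p.1) a x) := by
      intro p hp
      rw [Finset.HasAntidiagonal.mem_antidiagonal] at hp
      have : ((j : ℂ) + 1) = (p.2 : ℂ) + (p.1 : ℂ) := by rw [add_comm (p.2 : ℂ)]; exact_mod_cast hp.symm
      rw [this, add_smul]
    rw [Finset.sum_congr rfl e1, Finset.sum_add_distrib]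
    congr 1
    · rw [Finset.Nat.sum_antidiagonal_succ']
      simp only [Nat.cast_zero, zero_smul, add_zero, zero_add]
      apply Finset.sum_congr rfl
      intro p _
      rw [Derivation.map_smul, dd_succ, smul_comm]; push_cast; rfl
    · rw [Finset.Nat.sum_antidiagonal_succ]
      simp only [Nat.cast_zero, zero_smul, zero_add]
      apply Finset.sum_congr rfl
      intro p _
      cases n with
      | zero => simp
      | succ n =>
        have e : ((n : ℂ) + 1) * (n.choose p.1 : ℂ) =
            ((n+1).choose (p.1+1) : ℂ) * ((p.1 : ℂ) + 1) := by
          exact_mod_cast Nat.add_one_mul_choose_eq n p.1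
        rw [smul_smul, smul_smul]
        simp only [Nat.add_sub_cancel, Nat.add_sub_add_right]
        congr 1
        push_cast
        linear_combination e

include h in
theorem mu_SN (n m N : ℕ) (a : Jet σ) (p : ℕ → Jet σ) (hp : ∀ k ≥ N, p k = 0) (hn : n + 1 ≤ N) :
    mu n a (SN N p m) = ∑ i ∈ Finset.range (n+1),
      (n.choose i : ℂ) • SN N (fun k => mu (n - i) a (p k)) (m + i) := by
  rw [sum_ext_range hn]
  · simp only [SN, map_sum, map_smul, mu_dd_right h, Finset.smul_sum]
    have := sum_diag N (fun i r => ((n.choose i : ℂ)) • ((-1 : ℂ) ^ (m + i + r + 1)) •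
      dd r (mu (n - i) a (p (m + i + r)))) (by
        intro i r hir
        rw [hp _ (by omega)]; simp)
    rw [← this]
    refine Finset.sum_congr rfl fun j _ => Finset.sum_congr rfl fun q hq => ?_
    rw [Finset.HasAntidiagonal.mem_antidiagonal] at hq
    simp only [add_assoc, ← hq]
    rw [smul_comm]
  · intro i hi
    rw [Nat.choose_eq_zero_of_lt (by omega)]; simp

variable (mu) in
noncomputable def Q (n m : ℕ) (a b c : Jet σ) : Jet σ :=
  ∑ j ∈ Finset.range (n + 1), (n.choose j : ℂ) • mu (n + m - j) (mu j a b) c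

variable (mu) in
def EE (n m : ℕ) (a b c : Jet σ) : Prop :=
  mu n a (mu m b c) = mu m b (mu n a c) + Q mu n m a b c

include h hfin in
theorem cyc (a b c : Jet σ) (hE : ∀ n m, EE mu n m a c b) (n m : ℕ) : EE mu n m a b c := by
  obtain ⟨N1, hN1⟩ := hfin c b
  obtain ⟨N2, hN2⟩ := hfin_many hfin (fun _ => c) (fun j => mu j a b) n
  obtain ⟨N3, hN3⟩ := hfin_many hfin (fun j => mu j a c) (fun _ => b) n
  let N := n + 1 + N1 + N2 + N3
  have key : ∀ i ∈ Finset.range (n+1),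
      SN N (fun k => mu (n - i) a (mu k c b)) (m + i) =
      mu (m + i) (mu (n - i) a b) c +
      ∑ l ∈ Finset.range (n + 1), (((n - i).choose l : ℂ) * (-1) ^ (n - i - l)) •
        mu (n + m - l) b (mu l a c) := by
    intro i hi
    rw [Finset.mem_range] at hi
    have : (fun k => mu (n - i) a (mu k c b)) = fun k => mu k c (mu (n - i) a b) +
        ∑ l ∈ Finset.range (n - i + 1), ((n - i).choose l : ℂ) • mu (n - i + k - l) (mu l a c) b := by
      funext k
      exact hE (n - i) k
    rw [this, SN_add, SN_sum, ← mu_skew h (mu (n - i) a b) c (m + i) N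
      (fun k hk => hN2 (n - i) (by omega) k (by omega))]
    congr 1
    rw [← sum_ext_range (show n - i + 1 ≤ n + 1 by omega)]
    · apply Finset.sum_congr rfl
      intro l hl
      rw [Finset.mem_range] at hl
      have e : (fun k => mu (n - i + k - l) (mu l a c) b) =
          fun k => (fun k => mu k (mu l a c) b) (k + (n - i - l)) := by
        funext k
        simp only
        rw [show n - i + k - l = k + (n - i - l) by omega]
      rw [e, SN_shift N (fun k => mu k (mu l a c) b), ← mu_skew h b (mu l a c) _ N
        (fun k hk => hN3 l (by omega) k (by omega)), smul_smul,
        show m + i + (n - i - l) = n + m - l by omega]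
    · intro l hl
      rw [Nat.choose_eq_zero_of_lt (by omega)]; simp
  unfold EE
  rw [mu_skew h b c m N (fun k hk => hN1 k (by omega)),
    mu_SN h n m N a _ (fun k hk => hN1 k (by omega)) (by omega)]
  rw [Finset.sum_congr rfl (fun i hi => by rw [key i hi, smul_add])]
  rw [Finset.sum_add_distrib, add_comm]
  congr 1
  · simp only [Finset.smul_sum, smul_smul, ← mul_assoc]
    rw [Finset.sum_comm]
    simp only [← Finset.sum_smul]
    rw [Finset.sum_congr rfl (fun l hl => by
      rw [comb1 n l (by simpa [Nat.lt_succ_iff] using hl)])]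
    simp
  · rw [Q, ← Finset.sum_range_reflect]
    apply Finset.sum_congr rfl
    intro i hi
    rw [Finset.mem_range] at hi
    rw [show n + 1 - 1 - i = n - i by omega, Nat.choose_symm (by omega),
      show n - (n - i) = i by omega,
      show m + (n - i) = n + m - i by omega]

include h hfin in
theorem Q_swap (n m : ℕ) (a b c : Jet σ) : Q mu n m a b c = - Q mu m n b a c := by
  obtain ⟨N1, hN1⟩ := hfin b a
  let N := n + m + 1 + N1
  unfold Q
  rw [sum_ext_range (show n + 1 ≤ N by omega), sum_ext_range (show m + 1 ≤ N by omega)]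
  · have e1 : ∀ j, (n.choose j : ℂ) • mu (n + m - j) (mu j a b) c =
        ∑ i ∈ Finset.range N, (fun j i => (-((-1 : ℂ) ^ j * (n.choose j : ℂ) * ((n + m - j).choose i : ℂ))) •
          mu (n + m - (j + i)) (mu (j + i) b a) c) j i := by
      intro j
      rw [mu_skew h a b j N (fun k hk => hN1 k (by omega)), SN]
      simp only [map_sum, LinearMap.sum_apply, map_smul, LinearMap.smul_apply, mu_dd_left h,
        Finset.smul_sum, smul_smul, Nat.sub_sub]
      apply Finset.sum_congr rfl
      intro i _
      congr 1
      have : (-1 : ℂ) ^ (j + i + 1) = - ((-1) ^ j * (-1) ^ i) := by ring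
      have h2 : (-1 : ℂ) ^ i * (-1) ^ i = 1 := by rw [← mul_pow]; simp
      rw [this]
      linear_combination (-(-1 : ℂ)^j * (n.choose j : ℂ) * ((n + m - j).choose i : ℂ)) * h2
    rw [Finset.sum_congr rfl (fun j _ => e1 j), ← sum_diag N, ← Finset.sum_neg_distrib]
    · apply Finset.sum_congr rfl
      intro k _
      have := comb2 n (n + m) k (by omega)
      rw [Nat.add_sub_cancel_left] at this
      rw [← this, ← neg_smul, ← Finset.sum_neg_distrib, Finset.sum_smul]
      apply Finset.sum_congr rfl
      intro p hp
      rw [Finset.HasAntidiagonal.mem_antidiagonal] at hp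
      simp only [hp, add_comm m n]
    · intro j i hji
      rw [hN1 (j + i) (by omega)]; simp
  · intro i hi
    rw [Nat.choose_eq_zero_of_lt (by omega)]; simp
  · intro i hi
    rw [Nat.choose_eq_zero_of_lt (by omega)]; simp

include h hfin in
theorem E_swap (n m : ℕ) (a b c : Jet σ) (hE : EE mu m n b a c) : EE mu n m a b c := by
  unfold EE at *
  rw [hE, Q_swap h hfin n m]; abel

include h in
theorem Q_d (n m : ℕ) (a b c : Jet σ) : Q mu n m a b (jetD σ c) =
    jetD σ (Q mu n m a b c) + (n : ℂ) • Q mu (n - 1) m a b c + (m : ℂ) • Q mu n (m - 1) a b c := by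
  have e : (n : ℂ) • Q mu (n - 1) m a b c = ∑ j ∈ Finset.range (n + 1),
      ((n - j : ℕ) * (n.choose j : ℂ)) • mu (n + m - j - 1) (mu j a b) c := by
    cases n with
    | zero => simp
    | succ n =>
      rw [Finset.sum_range_succ, Nat.sub_self, Nat.cast_zero, zero_mul, zero_smul, add_zero, Q,
        Finset.smul_sum]
      apply Finset.sum_congr rfl
      intro j hj
      rw [Finset.mem_range] at hj
      rw [smul_smul, show n + 1 + m - j - 1 = n + 1 - 1 + m - j by omega]
      congr 1
      have := Nat.choose_mul_succ_eq n j
      simp only [Nat.add_sub_cancel]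
      rw [mul_comm, mul_comm ((n + 1 - j : ℕ) : ℂ)]
      exact_mod_cast this
  rw [e, Q, Q, Q, map_sum, Finset.smul_sum, ← Finset.sum_add_distrib, ← Finset.sum_add_distrib]
  apply Finset.sum_congr rfl
  intro j hj
  rw [Finset.mem_range] at hj
  rw [h.2.1, Derivation.map_smul, smul_add, add_assoc]
  congr 1
  cases m with
  | zero =>
    rw [smul_smul]; simp [mul_comm]
  | succ m =>
    rw [show n + (m + 1) - j - 1 = n + m - j by omega, show n + (m + 1 - 1) - j = n + m - j by omega,
      smul_smul, smul_smul, ← add_smul]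
    congr 1
    rw [show n + (m + 1) - j = (n - j) + (m + 1) by omega]
    push_cast; ring

include h in
theorem E_ext (a b : Jet σ) (hE : ∀ n m l, EE mu n m a b (MvPolynomial.X (l, 0))) (n m : ℕ)
    (c : Jet σ) : EE mu n m a b c := by
  have hX : ∀ k l n m, EE mu n m a b (MvPolynomial.X (l, k)) := by
    intro k
    induction k with
    | zero => intro l n m; exact hE n m l
    | succ k ih =>
      intro l n m
      have h1 := ih l n m
      have h2 := ih l (n-1) m
      have h3 := ih l n (m-1)
      unfold EE at *
      rw [← jetD_X, Q_d h, h.2.1 m b, h.2.1 n a]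
      simp only [map_add, map_smul, h.2.1, h1, h2, h3, smul_add]
      abel
  have hL := h.2.2.2.1
  have hone : ∀ n a, mu n a 1 = 0 := by
    intro n a
    simpa using hL n a 1 1
  induction c using MvPolynomial.induction_on with
  | C c =>
    have : (MvPolynomial.C c : Jet σ) = c • 1 := by
      rw [MvPolynomial.smul_eq_C_mul, mul_one]
    rw [this]; simp [EE, Q, hone]
  | add p q hp hq =>
    unfold EE Q at *
    simp only [map_add, hp, hq, smul_add, Finset.sum_add_distrib]; abel
  | mul_X p i hp =>
    have hx := hX i.2 i.1 n m
    unfold EE at *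
    have hQ : ∀ x y, Q mu n m a b (x * y) = Q mu n m a b x * y + x * Q mu n m a b y := by
      intro x y
      simp only [Q, hL, smul_add, Finset.sum_add_distrib, Finset.sum_mul, Finset.mul_sum,
        smul_mul_assoc, mul_smul_comm]
    simp only [hQ, hL, map_add, hp, hx]
    ring

variable (halt : ∀ a : MvPolynomial σ ℂ, P a a = 0)
  (hjac : ∀ a b c : MvPolynomial σ ℂ, P a (P b c) + P b (P c a) + P c (P a b) = 0)

include h halt hjac in
theorem E_base (n m : ℕ) (a b c : MvPolynomial σ ℂ) :
    EE mu n m (jetEmb σ a) (jetEmb σ b) (jetEmb σ c) := by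
  have h0 := h.2.2.2.2.1
  have h1 := h.2.2.2.2.2
  have hQ : Q mu n m (jetEmb σ a) (jetEmb σ b) (jetEmb σ c) =
      mu (n + m) (jetEmb σ (P a b)) (jetEmb σ c) := by
    rw [Q, Finset.sum_range_succ', Finset.sum_eq_zero]
    · simp [h0]
    · intro j _
      rw [h1 (j+1) (by omega)]; simp
  rw [EE, hQ]
  rcases Nat.eq_zero_or_pos n with rfl | hn <;> rcases Nat.eq_zero_or_pos m with rfl | hm
  · rw [h0, h0, h0, h0, h0, ← map_add]
    congr 1
    have := hjac a b c
    rw [P_skew halt (P a b) c, P_skew halt a c, map_neg]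
    rw [← sub_eq_zero, ← this]; abel
  · rw [h1 m hm, h0, h1 m hm, h1 _ (by omega)]; simp
  · rw [h1 n hn, h0, h1 n hn, h1 _ (by omega)]; simp
  · rw [h1 n hn, h1 m hm, h1 _ (by omega)]; simp

include h hfin halt hjac in
theorem E_all (n m : ℕ) (a b c : Jet σ) : EE mu n m a b c := by
  have s1 : ∀ i j n m c, EE mu n m (MvPolynomial.X (i, 0)) (MvPolynomial.X (j, 0)) c := by
    intro i j
    apply E_ext h
    intro n m l
    rw [← jetEmb_X, ← jetEmb_X, ← jetEmb_X]
    exact E_base h halt hjac n m _ _ _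
  have s2 : ∀ i b n m c, EE mu n m (MvPolynomial.X (i, 0)) b c := by
    intro i b
    apply E_ext h
    intro n m l
    exact cyc h hfin _ _ _ (fun n m => s1 i l n m b) n m
  apply E_ext h
  intro n m l
  exact cyc h hfin _ _ _ (fun n m => E_swap h hfin n m _ _ _ (s2 l a m n b)) n m

end jac
end JetAux

/-- for a Poisson bracket `{·,·}` on `A = MvPolynomial σ ℂ`, there
exists a unique family of ℂ-bilinear products `μ_n` on the jet algebra
`J = MvPolynomial (σ × ℕ) ℂ` satisfying sesquilinearity, antisymmetry, the right
Leibniz rule and the initial values `μ₀(ε a, ε b) = ε {a,b}`, `μ_n(ε a, ε b) = 0`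
for `n ≥ 1`; moreover this family satisfies the finiteness and Jacobi axioms, so
that `(J, ∂, {μ_n})` is a Lie* algebra whose products are derivations of the
multiplication — i.e. `J∞ A` canonically becomes a coisson (Poisson vertex)
algebra. -/
theorem stmt16 (σ : Type*)
    (P : MvPolynomial σ ℂ →ₗ[ℂ] MvPolynomial σ ℂ →ₗ[ℂ] MvPolynomial σ ℂ)
    (halt : ∀ a : MvPolynomial σ ℂ, P a a = 0)
    (hjac : ∀ a b c : MvPolynomial σ ℂ, P a (P b c) + P b (P c a) + P c (P a b) = 0)
    (hleib : ∀ a b c : MvPolynomial σ ℂ, P a (b * c) = P a b * c + b * P a c) :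
    (∃! mu : ℕ → Jet σ →ₗ[ℂ] Jet σ →ₗ[ℂ] Jet σ, JetCond σ P mu) ∧
    (∀ mu : ℕ → Jet σ →ₗ[ℂ] Jet σ →ₗ[ℂ] Jet σ, JetCond σ P mu →
      (∀ a b : Jet σ, ∃ N : ℕ, ∀ n ≥ N, mu n a b = 0) ∧
      (∀ (n m : ℕ) (a b c : Jet σ),
        mu n a (mu m b c) - mu m b (mu n a c)
          = ∑ᶠ j : ℕ, ((n.choose j : ℂ)) • mu (n + m - j) (mu j a b) c)) := by
  have hM := JetAux.MU_cond (P := P) halt hleib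
  refine ⟨⟨JetAux.MU P, hM, fun nu hnu => JetAux.mu_unique hnu hM⟩, ?_⟩
  intro mu hmu
  obtain rfl : mu = JetAux.MU P := JetAux.mu_unique hmu hM
  have hfin := JetAux.MU_zero (P := P)
  refine ⟨hfin, fun n m a b c => ?_⟩
  have hE := JetAux.E_all hmu hfin halt hjac n m a b c
  rw [JetAux.EE] at hE
  rw [hE, add_sub_cancel_left, JetAux.Q, finsum_eq_sum_of_support_subset]
  intro j hj
  by_contra hc
  apply hj
  simp only [Finset.coe_range, Set.mem_Iio, not_lt] at hc
  simp [Nat.choose_eq_zero_of_lt (show n < j by omega)]
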